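/- arXiv:2012.11902 — 3 statements merged into one kernel-verified Lean document; each statement's English description precedes it below -/
import Mathlib

section
/- Let Y and Y' be geodesic metric spaces with Y' Gromov hyperbolic. If f:Y→Y' is a subexponentially distorted map, then f is a quasi-isometric embedding, with quasi-isometry constants depending only on the distortion data of f and the hyperbolicity constant of Y'. -/
noncomputable section

open Metric Set Filter

namespace RelHypPaper

/-! ## Coarse maps between metric spaces -/

section CoarseMaps

variable {X : Type*} {X' : Type*} [PseudoMetricSpace X] [PseudoMetricSpace X']

/-- `f` is coarsely Lipschitz with constant `C`. -/
def CoarseLipschitzWith (C : ℝ) (f : X → X') : Prop :=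
  ∀ x y : X, dist (f x) (f y) ≤ C * dist x y + C

def CoarselyLipschitz (f : X → X') : Prop :=
  ∃ C : ℝ, 0 < C ∧ CoarseLipschitzWith C f

/-- `f` is `τ`-uniformly proper. -/
def UniformlyProperWith (τ : ℝ → ℝ) (f : X → X') : Prop :=
  CoarselyLipschitz f ∧ Filter.Tendsto τ Filter.atTop Filter.atTop ∧
    ∀ x y : X, τ (dist x y) ≤ dist (f x) (f y)

/-- quasi-isometric embedding with constants `Λ, μ`. -/
def QIEmbeddingWith (Λ μ : ℝ) (f : X → X') : Prop :=
  ∀ x y : X, dist x y / Λ - μ ≤ dist (f x) (f y) ∧ dist (f x) (f y) ≤ Λ * dist x y + μ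

def QIEmbedding (f : X → X') : Prop :=
  ∃ Λ μ : ℝ, 1 ≤ Λ ∧ 0 ≤ μ ∧ QIEmbeddingWith Λ μ f

/-- `s` is `μ`-coarsely dense. -/
def CoarselyDense (μ : ℝ) (s : Set X) : Prop :=
  ∀ x : X, ∃ y ∈ s, dist x y ≤ μ

/-- `f` is a quasi-isometry: a quasi-isometric embedding with coarsely dense image. -/
def QuasiIsometry (f : X → X') : Prop :=
  ∃ Λ μ : ℝ, 1 ≤ Λ ∧ 0 ≤ μ ∧ QIEmbeddingWith Λ μ f ∧ CoarselyDense μ (Set.range f)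

/-- polynomially distorted map: coarsely Lipschitz with lower bound `d^α - C`. -/
def PolynomiallyDistorted (f : X → X') : Prop :=
  CoarselyLipschitz f ∧ ∃ α C : ℝ, α ∈ Set.Ioc (0:ℝ) 1 ∧ 0 < C ∧
    ∀ x y : X, dist x y ^ α - C ≤ dist (f x) (f y)

/-- subexponentially distorted map. -/
def SubexponentiallyDistorted (f : X → X') : Prop :=
  CoarselyLipschitz f ∧ ∃ τ : ℝ → ℝ,
    Filter.Tendsto (fun t => τ t / Real.log t) Filter.atTop Filter.atTop ∧
    ∀ x y : X, τ (dist x y) ≤ dist (f x) (f y)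

end CoarseMaps

/-! ## Geodesics, Gromov hyperbolicity, rays -/

section Geodesics

variable {X : Type*} [PseudoMetricSpace X]

/-- `γ` is a unit-speed geodesic from `x` to `y`, parametrised on `[0, dist x y]`. -/
def IsGeodesicFrom (γ : ℝ → X) (x y : X) : Prop :=
  γ 0 = x ∧ γ (dist x y) = y ∧
    ∀ s ∈ Set.Icc (0:ℝ) (dist x y), ∀ t ∈ Set.Icc (0:ℝ) (dist x y),
      dist (γ s) (γ t) = |s - t|

/-- a geodesic metric space. -/
class GeodesicSpace (Y : Type*) [PseudoMetricSpace Y] : Prop where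
  exists_geod : ∀ x y : Y, ∃ γ : ℝ → Y, IsGeodesicFrom γ x y

/-- the Gromov product of `x` and `y` at `o`. -/
def gromovProd (o x y : X) : ℝ := (dist o x + dist o y - dist x y) / 2

/-- `δ`-hyperbolicity (four point condition). -/
def GromovHyperbolicWith (δ : ℝ) (Y : Type*) [PseudoMetricSpace Y] : Prop :=
  ∀ o x y z : Y, min (gromovProd o x y) (gromovProd o y z) - δ ≤ gromovProd o x z

def GromovHyperbolic (Y : Type*) [PseudoMetricSpace Y] : Prop :=
  ∃ δ : ℝ, 0 ≤ δ ∧ GromovHyperbolicWith δ Y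

/-- a unit speed geodesic ray based at `o`. -/
def GeodesicRay (o : X) (γ : ℝ → X) : Prop :=
  γ 0 = o ∧ ∀ s t : ℝ, 0 ≤ s → 0 ≤ t → dist (γ s) (γ t) = |s - t|

/-- a bi-infinite unit speed geodesic. -/
def IsGeodesicLine (ℓ : ℝ → X) : Prop :=
  ∀ s t : ℝ, dist (ℓ s) (ℓ t) = |s - t|

/-- the image of `γ₁` on `[0,∞)` lies within distance `C` of that of `γ₂`. -/
def WithinOf (C : ℝ) (γ₁ γ₂ : ℝ → X) : Prop :=
  ∀ t : ℝ, 0 ≤ t → ∃ s : ℝ, 0 ≤ s ∧ dist (γ₁ t) (γ₂ s) ≤ C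

/-- two rays converge to the same point at infinity: their images on `[0,∞)`
are at finite Hausdorff distance. -/
def SameEndpoint (γ₁ γ₂ : ℝ → X) : Prop :=
  ∃ C : ℝ, WithinOf C γ₁ γ₂ ∧ WithinOf C γ₂ γ₁

/-- the Gromov product at `o` of the endpoints at infinity of two rays. -/
def rayProd (o : X) (γ₁ γ₂ : ℝ → X) : ℝ :=
  Filter.liminf (fun t => gromovProd o (γ₁ t) (γ₂ t)) Filter.atTop

/-- a hyperbolic space is visual if every point is uniformly close to a
geodesic ray from the basepoint. -/
def Visual (Y : Type*) [PseudoMetricSpace Y] : Prop :=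
  ∀ w : Y, ∃ C : ℝ, 0 ≤ C ∧ ∀ x : Y, ∃ γ : ℝ → Y, GeodesicRay w γ ∧
    ∃ t : ℝ, 0 ≤ t ∧ dist x (γ t) ≤ C

end Geodesics

/-! ## Boundaries at infinity with visual metrics -/

/-- A realisation of the Gromov boundary of `Y`, with a visual metric of
parameter `ε` based at `o`: a metric space `Z` together with an assignment
`β` of boundary points to geodesic rays from `o`, which is surjective,
identifies exactly asymptotic rays, and whose metric is comparable to
`exp (-ε ·(Gromov product))`. -/
structure VisualBoundary (Y : Type*) [MetricSpace Y] where
  Z : Type*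
  [metZ : MetricSpace Z]
  o : Y
  ε : ℝ
  C₀ : ℝ
  hε : 0 < ε
  hC₀ : 1 ≤ C₀
  β : (ℝ → Y) → Z
  surj : ∀ z : Z, ∃ γ : ℝ → Y, GeodesicRay o γ ∧ β γ = z
  eq_iff : ∀ γ₁ γ₂ : ℝ → Y, GeodesicRay o γ₁ → GeodesicRay o γ₂ →
    (β γ₁ = β γ₂ ↔ SameEndpoint γ₁ γ₂)
  visual_le : ∀ γ₁ γ₂ : ℝ → Y, GeodesicRay o γ₁ → GeodesicRay o γ₂ →
    ¬ SameEndpoint γ₁ γ₂ →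
    dist (β γ₁) (β γ₂) ≤ C₀ * Real.exp (-ε * rayProd o γ₁ γ₂)
  visual_ge : ∀ γ₁ γ₂ : ℝ → Y, GeodesicRay o γ₁ → GeodesicRay o γ₂ →
    ¬ SameEndpoint γ₁ γ₂ →
    Real.exp (-ε * rayProd o γ₁ γ₂) ≤ C₀ * dist (β γ₁) (β γ₂)

attribute [instance] VisualBoundary.metZ

/-- `h` is the boundary map induced by `F`: the `F`-image of a ray representing
a boundary point `z` stays within bounded distance of any ray representing `h z`. -/
def InducesOnBoundary {Y Y' : Type*} [MetricSpace Y] [MetricSpace Y']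
    (V : VisualBoundary Y) (V' : VisualBoundary Y') (F : Y → Y') (h : V.Z → V'.Z) : Prop :=
  ∀ γ γ' : ℝ → _, GeodesicRay V.o γ → GeodesicRay V'.o γ' → V'.β γ' = h (V.β γ) →
    ∃ C : ℝ, WithinOf C (fun t => F (γ t)) γ'

end RelHypPaper

namespace RelHypPaper

universe u v

theorem aux_gp_comm {X : Type*} [PseudoMetricSpace X] (o x y : X) :
    gromovProd o x y = gromovProd o y x := by
  unfold gromovProd
  rw [dist_comm x y]; ring

/-- logarithmic chain estimate -/
theorem aux_chain {X : Type*} [PseudoMetricSpace X] {δ : ℝ} (hX : GromovHyperbolicWith δ X)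
    (g : ℝ → X) (L C D : ℝ) (p : X)
    (hstep : ∀ s ∈ Icc (0:ℝ) L, ∀ t ∈ Icc (0:ℝ) L, |s - t| ≤ 1 → dist (g s) (g t) ≤ 2 * C)
    (hD : ∀ s ∈ Icc (0:ℝ) L, D ≤ dist p (g s)) (k : ℕ) :
    ∀ s ∈ Icc (0:ℝ) L, ∀ t ∈ Icc (0:ℝ) L, |s - t| ≤ 2 ^ k →
      D - C - k * δ ≤ gromovProd p (g s) (g t) := by
  induction k with
  | zero =>
    intro s hs t ht hst
    have h1 := hstep s hs t ht (by simpa using hst)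
    have h2 := hD s hs
    have h3 := hD t ht
    unfold gromovProd
    push_cast
    linarith
  | succ k ih =>
    intro s hs t ht hst
    have hm : (s + t) / 2 ∈ Icc (0:ℝ) L := ⟨by linarith [hs.1, ht.1], by linarith [hs.2, ht.2]⟩
    rw [pow_succ] at hst
    have hst' := abs_le.1 hst
    have h1 := ih s hs _ hm (abs_le.2 ⟨by linarith, by linarith⟩)
    have h2 := ih _ hm t ht (abs_le.2 ⟨by linarith, by linarith⟩)
    have h3 := hX p (g s) (g ((s + t) / 2)) (g t)
    have h4 := le_min h1 h2
    push_cast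
    linarith

/-- existence of a dyadic scale -/
theorem aux_scale (t : ℝ) (ht : 2 ≤ t) : ∃ k : ℕ, t ≤ 2 ^ k ∧ (k : ℝ) ≤ 2 * Real.log t + 1 := by
  have hl : 0 < Real.log t := Real.log_pos (by linarith)
  have h2 : (1:ℝ) / 2 < Real.log 2 := by have := Real.log_two_gt_d9; linarith
  have hq : Real.log t / Real.log 2 ≤ 2 * Real.log t := by
    rw [div_le_iff₀ (by linarith)]
    nlinarith
  have hq0 : 0 ≤ Real.log t / Real.log 2 := by positivity
  refine ⟨⌈Real.log t / Real.log 2⌉₊, ?_, ?_⟩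
  · have h := Nat.le_ceil (Real.log t / Real.log 2)
    rw [div_le_iff₀ (by linarith)] at h
    rw [← Real.log_le_log_iff (by linarith) (by positivity), Real.log_pow]
    exact h
  · have := Nat.ceil_lt_add_one hq0
    linarith

theorem aux_tau (τ : ℝ → ℝ)
    (hτ : Filter.Tendsto (fun t => τ t / Real.log t) Filter.atTop Filter.atTop) (A : ℝ) :
    ∃ T : ℝ, 2 ≤ T ∧ ∀ t, T ≤ t → A * Real.log t ≤ τ t := by
  obtain ⟨T, hT⟩ := Filter.eventually_atTop.1 (hτ.eventually_ge_atTop A)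
  refine ⟨max T 2, le_max_right _ _, fun t ht => ?_⟩
  have h2 : 2 ≤ t := le_trans (le_max_right _ _) ht
  have h := hT t (le_trans (le_max_left _ _) ht)
  rwa [le_div_iff₀ (Real.log_pos (by linarith))] at h

/-- choosing a point of the path near an end of the detour -/
theorem aux_end {X : Type*} [PseudoMetricSpace X] (g : ℝ → X) (S : Set ℝ) (D : ℝ) (p a : X)
    (hD : ∀ s ∈ S, D ≤ dist p (g s)) (hD0 : 0 ≤ D)
    (h : (∃ s ∈ S, a = g s) ∨ (dist p a = 2 * D ∧ ∃ s ∈ S, dist a (g s) ≤ D + 1)) :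
    ∃ s ∈ S, dist a (g s) ≤ D + 1 ∧ D - 1 / 2 ≤ gromovProd p a (g s) := by
  rcases h with ⟨s, hs, rfl⟩ | ⟨h1, s, hs, h2⟩
  · refine ⟨s, hs, by rw [dist_self]; linarith, ?_⟩
    have := hD s hs
    unfold gromovProd
    rw [dist_self]; linarith
  · refine ⟨s, hs, h2, ?_⟩
    have := hD s hs
    unfold gromovProd
    linarith

/-- the geodesic stays near the path -/
theorem aux_morse {X : Type*} [PseudoMetricSpace X] {δ : ℝ} (hδ : 0 ≤ δ)
    (hX : GromovHyperbolicWith δ X)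
    (g : ℝ → X) (L C T : ℝ) (τ : ℝ → ℝ) (hL : 0 ≤ L) (hC : 0 < C) (hT2 : 2 ≤ T)
    (hT : ∀ t, T ≤ t → (24 * δ + 1) * Real.log t ≤ τ t)
    (hstep : ∀ s ∈ Icc (0:ℝ) L, ∀ t ∈ Icc (0:ℝ) L, |s - t| ≤ 1 → dist (g s) (g t) ≤ 2 * C)
    (hlow : ∀ s ∈ Icc (0:ℝ) L, ∀ t ∈ Icc (0:ℝ) L, τ |s - t| ≤ dist (g s) (g t))
    (α : ℝ → X) (hα : IsGeodesicFrom α (g 0) (g L)) :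
    ∀ s ∈ Icc (0:ℝ) (dist (g 0) (g L)), ∃ t ∈ Icc (0:ℝ) L,
      dist (α s) (g t) ≤ 2 * (C + 2 + 3 * δ + 2 * δ * Real.log T) + 1 := by
  set l := dist (g 0) (g L) with hl
  have hl0 : 0 ≤ l := dist_nonneg
  obtain ⟨hα0, hαl, hαd⟩ := hα
  rw [← hl] at hαl hαd
  set E := g '' Icc (0:ℝ) L with hE
  have hEne : E.Nonempty := ⟨g 0, 0, ⟨le_rfl, hL⟩, rfl⟩
  have hαc : ContinuousOn α (Icc 0 l) := by
    have : LipschitzOnWith 1 α (Icc 0 l) := by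
      apply LipschitzOnWith.of_dist_le_mul
      intro x hx y hy
      rw [hαd x hx y hy, Real.dist_eq]; simp
    exact this.continuousOn
  have hc : ContinuousOn (fun s => infDist (α s) E) (Icc 0 l) :=
    (continuous_infDist_pt E).comp_continuousOn hαc
  obtain ⟨s0, hs0, hmax⟩ := isCompact_Icc.exists_isMaxOn ⟨0, ⟨le_rfl, hl0⟩⟩ hc
  set D := infDist (α s0) E with hDdef
  have hD0 : 0 ≤ D := infDist_nonneg
  have hnear : ∀ s ∈ Icc (0:ℝ) l, ∃ t ∈ Icc (0:ℝ) L, dist (α s) (g t) ≤ D + 1 := by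
    intro s hs
    have h1 : infDist (α s) E ≤ D := hmax hs
    obtain ⟨y, ⟨t, ht, rfl⟩, hy⟩ := (infDist_lt_iff (r := D + 1) hEne).1 (by linarith)
    exact ⟨t, ht, hy.le⟩
  have hDle : ∀ s ∈ Icc (0:ℝ) L, D ≤ dist (α s0) (g s) := fun s hs =>
    infDist_le_dist_of_mem ⟨s, hs, rfl⟩
  -- two end points of the detour
  have hE1 : ∃ s1 ∈ Icc (0:ℝ) l, s1 ≤ s0 ∧ s0 - s1 ≤ 2 * D ∧
      ∃ s ∈ Icc (0:ℝ) L, dist (α s1) (g s) ≤ D + 1 ∧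
        D - 1 / 2 ≤ gromovProd (α s0) (α s1) (g s) := by
    by_cases h : s0 ≤ 2 * D
    · refine ⟨0, ⟨le_rfl, hl0⟩, hs0.1, by linarith, ?_⟩
      exact aux_end g _ D _ _ hDle hD0 (Or.inl ⟨0, ⟨le_rfl, hL⟩, hα0⟩)
    · push Not at h
      have hm : s0 - 2 * D ∈ Icc (0:ℝ) l := ⟨by linarith, by linarith [hs0.2]⟩
      refine ⟨s0 - 2 * D, hm, by linarith, by linarith, ?_⟩
      refine aux_end g _ D _ _ hDle hD0 (Or.inr ⟨?_, hnear _ hm⟩)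
      rw [hαd _ hs0 _ hm, abs_of_nonneg] <;> linarith
  have hE2 : ∃ s2 ∈ Icc (0:ℝ) l, s0 ≤ s2 ∧ s2 - s0 ≤ 2 * D ∧
      ∃ s ∈ Icc (0:ℝ) L, dist (α s2) (g s) ≤ D + 1 ∧
        D - 1 / 2 ≤ gromovProd (α s0) (α s2) (g s) := by
    by_cases h : l ≤ s0 + 2 * D
    · refine ⟨l, ⟨hl0, le_rfl⟩, hs0.2, by linarith, ?_⟩
      exact aux_end g _ D _ _ hDle hD0 (Or.inl ⟨L, ⟨hL, le_rfl⟩, hαl⟩)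
    · push Not at h
      have hm : s0 + 2 * D ∈ Icc (0:ℝ) l := ⟨by linarith [hs0.1], by linarith⟩
      refine ⟨s0 + 2 * D, hm, by linarith, by linarith, ?_⟩
      refine aux_end g _ D _ _ hDle hD0 (Or.inr ⟨?_, hnear _ hm⟩)
      rw [hαd _ hs0 _ hm, abs_of_nonpos] <;> linarith
  obtain ⟨s1, hs1, h10, h1D, a, ha, ha1, ha2⟩ := hE1
  obtain ⟨s2, hs2, h20, h2D, b, hb, hb1, hb2⟩ := hE2
  have d12 : dist (α s1) (α s2) = s2 - s1 := by
    rw [hαd _ hs1 _ hs2, abs_of_nonpos] <;> linarith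
  have d01 : dist (α s0) (α s1) = s0 - s1 := by
    rw [hαd _ hs0 _ hs1, abs_of_nonneg] <;> linarith
  have d02 : dist (α s0) (α s2) = s2 - s0 := by
    rw [hαd _ hs0 _ hs2, abs_of_nonpos] <;> linarith
  have hgp0 : gromovProd (α s0) (α s1) (α s2) = 0 := by
    unfold gromovProd
    rw [d12, d01, d02]; ring
  have hab : dist (g a) (g b) ≤ 6 * D + 2 := by
    have h1 := dist_triangle4 (g a) (α s1) (α s2) (g b)
    rw [dist_comm (g a) (α s1)] at h1
    linarith
  have hτ := (hlow a ha b hb).trans hab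
  obtain ⟨k, hk1, hk2⟩ := aux_scale (max |a - b| T) (hT2.trans (le_max_right _ _))
  have hlogT : 0 < Real.log T := Real.log_pos (by linarith)
  have hlog : (24 * δ + 1) * Real.log (max |a - b| T) ≤
      (24 * δ + 1) * Real.log T + (6 * D + 2) := by
    rcases le_total |a - b| T with h | h
    · rw [max_eq_right h]; linarith
    · rw [max_eq_left h]
      have := hT _ h
      have : 0 ≤ (24 * δ + 1) * Real.log T := by positivity
      linarith
  have hch := aux_chain hX g L C D (α s0) hstep hDle k a ha b hb ((le_max_left _ _).trans hk1)
  have hkδ : 0 ≤ k * δ := by positivity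
  have h1 := hX (α s0) (α s1) (g a) (α s2)
  have h2 := hX (α s0) (g a) (g b) (α s2)
  rw [aux_gp_comm] at hb2
  have h3 : D - C - k * δ - 1 / 2 ≤ min (gromovProd (α s0) (g a) (g b))
      (gromovProd (α s0) (g b) (α s2)) := le_min (by linarith) (by linarith)
  have h4 : D - C - k * δ - 1 / 2 - δ ≤ min (gromovProd (α s0) (α s1) (g a))
      (gromovProd (α s0) (g a) (α s2)) := le_min (by linarith) (by linarith)
  have h5 : D ≤ C + 1 / 2 + (k + 2) * δ := by linarith
  set M := Real.log (max |a - b| T)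
  have h6 : k * δ ≤ (2 * M + 1) * δ := mul_le_mul_of_nonneg_right hk2 hδ
  have h7 : 2 * δ * (M - Real.log T) ≤ (6 * D + 2) / 12 := by
    rcases le_total M (Real.log T) with h | h
    · have : δ * (M - Real.log T) ≤ 0 := mul_nonpos_of_nonneg_of_nonpos hδ (by linarith)
      linarith
    · linarith
  have hfin : D ≤ 2 * (C + 2 + 3 * δ + 2 * δ * Real.log T) := by linarith
  intro s hs
  obtain ⟨t, ht, h⟩ := hnear s hs
  exact ⟨t, ht, by linarith⟩

/-- if the geodesic stays near the path, the path is short -/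
theorem aux_count {X : Type*} [PseudoMetricSpace X]
    (g α : ℝ → X) (L R K : ℝ) (τ : ℝ → ℝ) (hL : 0 ≤ L) (hR : 0 ≤ R)
    (hK : ∀ t, K < t → 2 * R + 1 < τ t)
    (hlow : ∀ s ∈ Icc (0:ℝ) L, ∀ t ∈ Icc (0:ℝ) L, τ |s - t| ≤ dist (g s) (g t))
    (hα : IsGeodesicFrom α (g 0) (g L))
    (hnear : ∀ s ∈ Icc (0:ℝ) (dist (g 0) (g L)), ∃ t ∈ Icc (0:ℝ) L, dist (α s) (g t) ≤ R)
    (n : ℕ) : ∀ s ∈ Icc (0:ℝ) (dist (g 0) (g L)), s ≤ n → ∀ t ∈ Icc (0:ℝ) L,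
      dist (α s) (g t) ≤ R → t ≤ K * (n + 1) := by
  obtain ⟨hα0, hαl, hαd⟩ := hα
  have hclose : ∀ s ∈ Icc (0:ℝ) L, ∀ t ∈ Icc (0:ℝ) L, dist (g s) (g t) ≤ 2 * R + 1 →
      |s - t| ≤ K := by
    intro s hs t ht h
    by_contra! hc
    have := hK _ hc
    have := hlow s hs t ht
    linarith
  induction n with
  | zero =>
    intro s hs hsn t ht h
    have hs0 : s = 0 := le_antisymm (by simpa using hsn) hs.1
    rw [hs0, hα0] at h
    have := hclose 0 ⟨le_rfl, hL⟩ t ht (by linarith)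
    have := (abs_le.1 this).1
    push_cast
    linarith
  | succ n ih =>
    intro s hs hsn t ht h
    push_cast at hsn ⊢
    have hm : max 0 (s - 1) ∈ Icc (0:ℝ) (dist (g 0) (g L)) :=
      ⟨le_max_left _ _, max_le dist_nonneg (by linarith [hs.2])⟩
    obtain ⟨t', ht', h'⟩ := hnear _ hm
    have h1 := ih _ hm (max_le (Nat.cast_nonneg n) (by linarith)) t' ht' h'
    have h2 : dist (α (max 0 (s - 1))) (α s) ≤ 1 := by
      rw [hαd _ hm _ hs, abs_le]
      have := le_max_right 0 (s - 1)
      have : max 0 (s - 1) ≤ s := max_le hs.1 (by linarith)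
      constructor <;> linarith
    have h3 := dist_triangle4 (g t') (α (max 0 (s - 1))) (α s) (g t)
    rw [dist_comm (g t') (α _)] at h3
    have h4 := (abs_le.1 (hclose t' ht' t ht (by linarith))).1
    linarith

/-- **Proposition 4.5.** A subexponentially distorted map from a geodesic
metric space to a Gromov hyperbolic geodesic metric space is a quasi-isometric
embedding, with constants depending only on the distortion data `(C, τ)` of
`f` and on the hyperbolicity constant `δ`. -/
theorem subexponentiallyDistorted_into_hyperbolic_is_QIEmbedding
    (C : ℝ) (τ : ℝ → ℝ) (δ : ℝ) (hC : 0 < C) (hδ : 0 ≤ δ)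
    (hτ : Filter.Tendsto (fun t => τ t / Real.log t) Filter.atTop Filter.atTop) :
    ∃ Λ μ : ℝ, 1 ≤ Λ ∧ 0 ≤ μ ∧
      ∀ (Y : Type u) (Y' : Type v) [MetricSpace Y] [MetricSpace Y']
        [GeodesicSpace Y] [GeodesicSpace Y'] (f : Y → Y'),
        GromovHyperbolicWith δ Y' →
        CoarseLipschitzWith C f →
        (∀ x y : Y, τ (dist x y) ≤ dist (f x) (f y)) →
        QIEmbeddingWith Λ μ f := by
  obtain ⟨T, hT2, hT⟩ := aux_tau τ hτ (24 * δ + 1)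
  obtain ⟨T1, hT12, hT1⟩ := aux_tau τ hτ 1
  have hlogT : 0 < Real.log T := Real.log_pos (by linarith)
  set R := 2 * (C + 2 + 3 * δ + 2 * δ * Real.log T) + 1 with hRdef
  have hR : 0 ≤ R := by positivity
  set K := max T1 (Real.exp (2 * R + 1)) with hKdef
  have hK2 : 2 ≤ K := hT12.trans (le_max_left _ _)
  have hK : ∀ t, K < t → 2 * R + 1 < τ t := by
    intro t ht
    have h1 := hT1 t ((le_max_left _ _).trans ht.le)
    have h2 : 2 * R + 1 < Real.log t := by
      rw [Real.lt_log_iff_exp_lt (by linarith)]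
      exact (le_max_right _ _).trans_lt ht
    linarith
  refine ⟨K + C, 2 + C, by linarith, by linarith, ?_⟩
  intro Y Y' _ _ _ _ f hY' hf hlowf x y
  have hd : 0 ≤ dist x y := dist_nonneg
  have hd' : 0 ≤ dist (f x) (f y) := dist_nonneg
  refine ⟨?_, ?_⟩
  · obtain ⟨γ, hγ0, hγL, hγd⟩ := GeodesicSpace.exists_geod x y
    set L := dist x y with hLdef
    have e0 : f (γ 0) = f x := by rw [hγ0]
    have eL : f (γ L) = f y := by rw [hγL]
    obtain ⟨α, hα⟩ := GeodesicSpace.exists_geod (f (γ 0)) (f (γ L))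
    have hstep : ∀ s ∈ Icc (0:ℝ) L, ∀ t ∈ Icc (0:ℝ) L, |s - t| ≤ 1 →
        dist ((fun u => f (γ u)) s) ((fun u => f (γ u)) t) ≤ 2 * C := by
      intro s hs t ht hst
      have h1 := hf (γ s) (γ t)
      rw [hγd s hs t ht] at h1
      have h2 : C * |s - t| ≤ C * 1 := mul_le_mul_of_nonneg_left hst hC.le
      show dist (f (γ s)) (f (γ t)) ≤ 2 * C
      linarith
    have hlow : ∀ s ∈ Icc (0:ℝ) L, ∀ t ∈ Icc (0:ℝ) L,
        τ |s - t| ≤ dist ((fun u => f (γ u)) s) ((fun u => f (γ u)) t) := by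
      intro s hs t ht
      rw [← hγd s hs t ht]
      exact hlowf _ _
    have hnear := aux_morse hδ hY' (fun u => f (γ u)) L C T τ hd hC hT2 hT hstep hlow α hα
    have hfin := aux_count (fun u => f (γ u)) α L R K τ hd hR hK hlow hα hnear
      ⌈dist (f (γ 0)) (f (γ L))⌉₊ (dist (f (γ 0)) (f (γ L))) ⟨dist_nonneg, le_rfl⟩
      (Nat.le_ceil _) L ⟨hd, le_rfl⟩ (by
        show dist (α (dist (f (γ 0)) (f (γ L)))) (f (γ L)) ≤ R
        rw [hα.2.1, dist_self]; exact hR)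
    rw [e0, eL] at hfin
    have hc := Nat.ceil_lt_add_one hd'
    set m : ℝ := (⌈dist (f x) (f y)⌉₊ : ℝ)
    have h1 : K * (m + 1) ≤ K * (dist (f x) (f y) + 2) :=
      mul_le_mul_of_nonneg_left (by linarith) (by linarith)
    have h2 : L / (K + C) ≤ dist (f x) (f y) + 2 := by
      rw [div_le_iff₀ (by linarith)]
      have : 0 ≤ (dist (f x) (f y) + 2) * C := by positivity
      linarith
    linarith
  · have h1 := hf x y
    have : 0 ≤ K * dist x y := mul_nonneg (by linarith) hd
    linarith

end RelHypPaper
end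
end

section
/- Let (Y,𝒫) be a relatively hyperbolic space with transient-set constants μ,R fixed as in the structure theory. For every L there exists a constant K with the following property: if γ is a geodesic in Y and α:[a,b]→Y is a coarsely L-Lipschitz path with the same endpoints as γ, then every transient point p∈trans_{μ,R}(γ) satisfies d(p,α([a,b])) ≤ K·log(|b−a|+1)+K. -/
noncomputable section

open Metric Set Filter

namespace RelHypPaper

/-! ## Cusped spaces and relatively hyperbolic spaces -/

/-- `s` is `k`-coarsely connected. -/
def CoarselyConnectedWith {X : Type*} [PseudoMetricSpace X] (k : ℝ) (s : Set X) : Prop :=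
  ∀ x ∈ s, ∀ y ∈ s, ∃ (n : ℕ) (c : ℕ → X), c 0 = x ∧ c n = y ∧
    (∀ m ≤ n, c m ∈ s) ∧ ∀ m < n, dist (c m) (c (m + 1)) ≤ k

/-- The data of a cusped space for `(X, P)`: a proper geodesic space `Cusp`
containing (a uniformly properly embedded copy of) `X`, obtained by gluing to
each peripheral set `P i` a uniformly admissible horoball `Horo i`, foliated by
vertical geodesic rays `ray i x` based at the points `x` of a `C`-net
`core i ⊆ P i`, satisfying the logarithmic distance formula of admissible
horoballs. -/
structure CuspedSpace (X : Type*) [MetricSpace X] {ι : Type*} (P : ι → Set X) where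
  /-- the cusped space -/
  Cusp : Type*
  [metC : MetricSpace Cusp]
  /-- the uniform constant of the admissible horoballs and nets -/
  Cconst : ℝ
  /-- the uniform bi-Lipschitz constant of the admissible horoballs -/
  L : ℝ
  /-- the uniform coarse connectedness constant of the peripheral sets -/
  k : ℝ
  hC : 0 < Cconst
  hL : 1 ≤ L
  hk : 0 < k
  geodX : GeodesicSpace X
  properX : ProperSpace X
  conn : ∀ i, CoarselyConnectedWith k (P i)
  /-- the inclusion of `X` into the cusped space -/
  incl : X → Cusp
  incl_inj : Function.Injective incl
  incl_short : ∀ x y : X, dist (incl x) (incl y) ≤ dist x y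
  /-- the net `P̂ ⊆ P` along which the horoball is glued -/
  core : ι → Set X
  core_sub : ∀ i, core i ⊆ P i
  core_net : ∀ i, ∀ x ∈ P i, ∃ y ∈ core i, dist x y ≤ Cconst
  /-- the horoballs inside the cusped space -/
  Horo : ι → Set Cusp
  /-- the vertical geodesic rays of the horoballs -/
  ray : ι → X → ℝ → Cusp
  ray_zero : ∀ i, ∀ x ∈ core i, ray i x 0 = incl x
  ray_isom : ∀ i, ∀ x ∈ core i, ∀ s t : ℝ, 0 ≤ s → 0 ≤ t →
    dist (ray i x s) (ray i x t) = |s - t|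
  ray_mem : ∀ i, ∀ x ∈ core i, ∀ t : ℝ, 0 ≤ t → ray i x t ∈ Horo i
  horo_near_ray : ∀ i, ∀ p ∈ Horo i, ∃ x ∈ core i, ∃ t : ℝ, 0 ≤ t ∧
    dist p (ray i x t) ≤ Cconst
  core_lower : ∀ i, ∀ x ∈ core i, ∀ y ∈ core i,
    dist (incl x) (incl y) ≤ 1 → dist x y / L ≤ dist (incl x) (incl y)
  /-- the logarithmic distance formula inside horoballs -/
  dist_formula : ∀ i, ∀ x ∈ core i, ∀ y ∈ core i, ∀ m n : ℝ, 0 ≤ m → 0 ≤ n →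
    |dist (ray i x m) (ray i y n) -
      (2 * Real.log (dist x y * Real.exp (-(max m n)) + 1) + |m - n|)| ≤ Cconst
  /-- the cusped space is the union of `X` and the horoballs -/
  cusp_cover : ∀ p : Cusp, p ∈ Set.range incl ∨ ∃ i, p ∈ Horo i
  geodC : GeodesicSpace Cusp
  properC : ProperSpace Cusp

attribute [instance] CuspedSpace.metC

/-- `(X, P)` with a choice of cusped space is relatively hyperbolic when the
cusped space is Gromov hyperbolic. -/
structure RelHypSpace (X : Type*) [MetricSpace X] {ι : Type*} (P : ι → Set X)
    extends CuspedSpace X P where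
  δ : ℝ
  hδ : 0 ≤ δ
  hypC : GromovHyperbolicWith δ Cusp

/-- The boundary at infinity of a relatively hyperbolic space, together with its
shadow decoration: to each peripheral `P i` corresponds the parabolic point
`aP i`, namely the endpoint at infinity of the vertical rays of the horoball
`Horo i`. -/
structure BoundaryOf {X : Type*} [MetricSpace X] {ι : Type*} {P : ι → Set X}
    (RH : RelHypSpace X P) extends VisualBoundary RH.Cusp where
  /-- the parabolic points -/
  aP : ι → Z
  aP_inj : Function.Injective aP
  aP_spec : ∀ i : ι, ∃ γ : ℝ → RH.Cusp, GeodesicRay o γ ∧ β γ = aP i ∧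
    ∀ x ∈ RH.core i, SameEndpoint γ (RH.ray i x)
  shadow_le_diam : ∃ K : ℝ, 0 < K ∧ ∀ i : ι,
    ENNReal.ofReal (Real.exp (-ε * Metric.infDist o (RH.incl '' P i))) ≤
      ENNReal.ofReal K * EMetric.diam (Set.univ : Set Z)

/-- the radius of the shadow of the peripheral set `P i`. -/
def BoundaryOf.rP {X : Type*} [MetricSpace X] {ι : Type*} {P : ι → Set X}
    {RH : RelHypSpace X P} (V : BoundaryOf RH) (i : ι) : ℝ :=
  Real.exp (-V.ε * Metric.infDist V.o (RH.incl '' P i))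

/-- `(X,P)` is visually complete. -/
def VisuallyComplete {X : Type*} [MetricSpace X] {ι : Type*} {P : ι → Set X}
    (RH : RelHypSpace X P) : Prop :=
  ∀ w : RH.Cusp, ∃ C : ℝ, 0 ≤ C ∧ ∀ x : RH.Cusp,
    ∃ γa γb : ℝ → RH.Cusp, GeodesicRay w γa ∧ GeodesicRay w γb ∧
      ¬ SameEndpoint γa γb ∧
      (∃ t : ℝ, 0 ≤ t ∧ dist x (γa t) ≤ C) ∧
      (∃ t : ℝ, 0 ≤ t ∧ dist x (γb t) ≤ C) ∧
      ∃ ℓ : ℝ → RH.Cusp, IsGeodesicLine ℓ ∧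
        SameEndpoint (fun t => ℓ t) γa ∧ SameEndpoint (fun t => ℓ (-t)) γb ∧
        ∃ t : ℝ, dist x (ℓ t) ≤ C

end RelHypPaper

namespace RelHypPaper

/-! ## Deep and transient points of geodesics -/

/-- The parameter `s` of the geodesic `γ : [a,b] → X` is a deep point (with
constants `μ, R`): it lies on a subgeodesic `γ|[u,v]` with endpoints in the
`μ`-neighbourhood of some peripheral set `P i`, at distance more than `R`
from both endpoints. -/
def DeepParam {X : Type*} [MetricSpace X] {ι : Type*} (P : ι → Set X)
    (μ R : ℝ) (γ : ℝ → X) (a b s : ℝ) : Prop :=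
  ∃ u v : ℝ, a ≤ u ∧ u ≤ s ∧ s ≤ v ∧ v ≤ b ∧ R < s - u ∧ R < v - s ∧
    ∃ i : ι, γ u ∈ Metric.cthickening μ (P i) ∧ γ v ∈ Metric.cthickening μ (P i)

/-- The parameter `s` of the geodesic `γ : [a,b] → X` is a transient point. -/
def TransientParam {X : Type*} [MetricSpace X] {ι : Type*} (P : ι → Set X)
    (μ R : ℝ) (γ : ℝ → X) (a b s : ℝ) : Prop :=
  s ∈ Set.Icc a b ∧ ¬ DeepParam P μ R γ a b s

/-- The relative Rips condition with constants `μ, R, D`: transient points of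
one side of a geodesic triangle are `D`-close to transient points of the other
two sides. -/
def RelRips {X : Type*} [MetricSpace X] {ι : Type*} (P : ι → Set X)
    (μ R D : ℝ) : Prop :=
  ∀ x y z : X, ∀ γ γ₁ γ₂ : ℝ → X,
    IsGeodesicFrom γ x y → IsGeodesicFrom γ₁ x z → IsGeodesicFrom γ₂ z y →
    ∀ s : ℝ, TransientParam P μ R γ 0 (dist x y) s →
      (∃ t : ℝ, TransientParam P μ R γ₁ 0 (dist x z) t ∧ dist (γ s) (γ₁ t) ≤ D) ∨
      (∃ t : ℝ, TransientParam P μ R γ₂ 0 (dist z y) t ∧ dist (γ s) (γ₂ t) ≤ D)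

end RelHypPaper

namespace RelHypPaper

universe u w

theorem dyadic_aux {X : Type*} [MetricSpace X] {ι : Type*} {P : ι → Set X}
    (hG : GeodesicSpace X) (μ R D : ℝ)
    (hRips : RelRips P μ R D) (L : ℝ) (hL : 0 < L) (n : ℕ) :
      ∀ (x y : X) (γ : ℝ → X), IsGeodesicFrom γ x y →
      ∀ (α : ℝ → X) (a b : ℝ), a ≤ b → b - a ≤ 2 ^ n → α a = x → α b = y →
        (∀ s ∈ Set.Icc a b, ∀ t ∈ Set.Icc a b, dist (α s) (α t) ≤ L * |s - t| + L) →
        ∀ s : ℝ, TransientParam P μ R γ 0 (dist x y) s →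
          ∃ t ∈ Set.Icc a b, dist (γ s) (α t) ≤ D * n + 2 * L := by
  induction n with
  | zero =>
    intro x y γ hγ α a b hab hn hx hy hα s hs
    refine ⟨a, ⟨le_rfl, hab⟩, ?_⟩
    obtain ⟨⟨h0, h1⟩, -⟩ := hs
    have h2 := hα a ⟨le_rfl, hab⟩ b ⟨hab, le_rfl⟩
    have h3 := hγ.2.2 s ⟨h0, h1⟩ 0 ⟨le_rfl, dist_nonneg⟩
    rw [hγ.1, sub_zero, abs_of_nonneg h0] at h3
    rw [hx, hy, abs_sub_comm, abs_of_nonneg (by linarith)] at h2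
    rw [hx, h3]
    simp only [pow_zero] at hn
    have : L * (b - a) ≤ L * 1 := mul_le_mul_of_nonneg_left hn hL.le
    simp
    linarith
  | succ n ih =>
    intro x y γ hγ α a b hab hn hx hy hα s hs
    rw [pow_succ] at hn
    have ham : a ≤ (a + b) / 2 := by linarith
    have hmb : (a + b) / 2 ≤ b := by linarith
    obtain ⟨γ₁, hγ₁⟩ := hG.exists_geod x (α ((a + b) / 2))
    obtain ⟨γ₂, hγ₂⟩ := hG.exists_geod (α ((a + b) / 2)) y
    push_cast
    rcases hRips x y (α ((a + b) / 2)) γ γ₁ γ₂ hγ hγ₁ hγ₂ s hs with ⟨t, ht, hd⟩ | ⟨t, ht, hd⟩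
    · obtain ⟨r, hr, hrd⟩ := ih _ _ γ₁ hγ₁ α a ((a + b) / 2) ham (by linarith) hx rfl
        (fun s hs t ht => hα s ⟨hs.1, hs.2.trans hmb⟩ t ⟨ht.1, ht.2.trans hmb⟩) t ht
      refine ⟨r, ⟨hr.1, hr.2.trans hmb⟩, ?_⟩
      linarith [dist_triangle (γ s) (γ₁ t) (α r)]
    · obtain ⟨r, hr, hrd⟩ := ih _ _ γ₂ hγ₂ α ((a + b) / 2) b hmb (by linarith) rfl hy
        (fun s hs t ht => hα s ⟨ham.trans hs.1, hs.2⟩ t ⟨ham.trans ht.1, ht.2⟩) t ht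
      refine ⟨r, ⟨ham.trans hr.1, hr.2⟩, ?_⟩
      linarith [dist_triangle (γ s) (γ₂ t) (α r)]

/-- **Lemma 4.6.** In a relatively hyperbolic space `(X, P)` with transient-set
constants `μ, R` satisfying the relative Rips condition, for every `L` there is
`K` such that any transient point of a geodesic `γ` is within distance
`K·log(|b-a|+1) + K` of any coarsely `L`-Lipschitz path `α : [a,b] → X` with
the same endpoints as `γ`. -/
theorem transient_close_to_coarse_lipschitz_paths
    {X : Type u} [MetricSpace X] {ι : Type w} {P : ι → Set X}
    (RH : RelHypSpace X P) (μ R D : ℝ) (hμ : 0 ≤ μ) (hR : 0 ≤ R) (hD : 0 ≤ D)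
    (hRips : RelRips P μ R D) :
    ∀ L : ℝ, 0 < L → ∃ K : ℝ, 0 < K ∧
      ∀ (x y : X) (γ : ℝ → X), IsGeodesicFrom γ x y →
      ∀ (α : ℝ → X) (a b : ℝ), a ≤ b → α a = x → α b = y →
        (∀ s ∈ Set.Icc a b, ∀ t ∈ Set.Icc a b, dist (α s) (α t) ≤ L * |s - t| + L) →
        ∀ s : ℝ, TransientParam P μ R γ 0 (dist x y) s →
          ∃ t ∈ Set.Icc a b, dist (γ s) (α t) ≤ K * Real.log (|b - a| + 1) + K := by
  intro L hL
  refine ⟨2 * D + 2 * L, by linarith, ?_⟩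
  intro x y γ hγ α a b hab hx hy hα s hs
  have hT : 0 ≤ b - a := by linarith
  rw [abs_of_nonneg hT]
  have hlog : 0 ≤ Real.log (b - a + 1) := Real.log_nonneg (by linarith)
  have hn1 := Nat.le_ceil (2 * Real.log (b - a + 1))
  have hn2 := Nat.ceil_lt_add_one (a := 2 * Real.log (b - a + 1)) (by linarith)
  generalize ⌈2 * Real.log (b - a + 1)⌉₊ = n at hn1 hn2
  have hpow : b - a ≤ 2 ^ n := by
    have h1 : Real.log (b - a + 1) ≤ Real.log ((2 : ℝ) ^ n) := by
      rw [Real.log_pow]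
      have := Real.log_two_gt_d9
      nlinarith [(Nat.cast_nonneg n : (0 : ℝ) ≤ n)]
    have h2 := (Real.log_le_log_iff (by linarith) (by positivity)).1 h1
    linarith
  obtain ⟨t, ht, hd⟩ := dyadic_aux RH.geodX μ R D hRips L hL n x y γ hγ α a b hab hpow hx hy hα s hs
  refine ⟨t, ht, hd.trans ?_⟩
  have h3 : D * n ≤ D * (2 * Real.log (b - a + 1) + 1) := mul_le_mul_of_nonneg_left hn2.le hD
  have h4 : 0 ≤ L * Real.log (b - a + 1) := by positivity
  nlinarith

end RelHypPaper
end
end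

section
/- Let (Y,𝒫) be a relatively hyperbolic space with transient-set constants fixed as in the structure theory. Let γ be a geodesic in Y and let α be the image of a subexponentially distorted coarsely Lipschitz map [0,T]→Y with the same endpoints as γ. Then every transient point p of γ satisfies d(p,α) ≤ E, where E is a constant depending only on the distortion data of the map and on (Y,𝒫), and not on γ, α or T. -/
noncomputable section

open Metric Set Filter

namespace RelHypPaper

universe u w

lemma dyadic_aux_s18 {X : Type*} [MetricSpace X] (TR : X → X → X → Prop) (D l : ℝ)
    (hD : 0 ≤ D)
    (hend : ∀ x y p, TR x y p → dist x p ≤ dist x y)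
    (hr : ∀ x y z p, TR x y p →
      (∃ q, TR x z q ∧ dist p q ≤ D) ∨ (∃ q, TR z y q ∧ dist p q ≤ D))
    (c : ℕ → X) (n : ℕ) (hl : 0 ≤ l) (step : ∀ i, i < n → dist (c i) (c (i + 1)) ≤ l) :
    ∀ (k a b : ℕ) (p : X), a ≤ b → b ≤ n → b - a ≤ 2 ^ k → TR (c a) (c b) p →
      ∃ m, a ≤ m ∧ m ≤ b ∧ dist p (c m) ≤ D * k + l := by
  intro k
  induction k with
  | zero =>
    intro a b p hab hbn hk h
    refine ⟨a, le_refl _, hab, ?_⟩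
    have h1 := hend _ _ _ h
    rw [dist_comm] at h1
    have h2 : dist (c a) (c b) ≤ l := by
      rcases Nat.eq_or_lt_of_le hab with rfl | hlt
      · simpa using hl
      · have : b = a + 1 := by
          simp at hk
          omega
        subst this
        exact step a (by omega)
    simp
    linarith
  | succ k ih =>
    intro a b p hab hbn hk h
    have h2 : 2 ^ (k + 1) = 2 * 2 ^ k := by ring
    rcases hr _ _ (c ((a + b) / 2)) p h with ⟨q, hq, hpq⟩ | ⟨q, hq, hpq⟩
    · obtain ⟨m, h3, h4, h5⟩ := ih a ((a + b) / 2) q (by omega) (by omega) (by omega) hq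
      refine ⟨m, by omega, by omega, ?_⟩
      have := dist_triangle p q (c m)
      push_cast
      linarith
    · obtain ⟨m, h3, h4, h5⟩ := ih ((a + b) / 2) b q (by omega) (by omega) (by omega) hq
      refine ⟨m, by omega, by omega, ?_⟩
      have := dist_triangle p q (c m)
      push_cast
      linarith

lemma key_aux {X : Type*} [MetricSpace X] (TR : X → X → X → Prop) (D l M₀ B : ℝ)
    (hD : 0 ≤ D)
    (hend : ∀ x y p, TR x y p → dist x p ≤ dist x y)
    (hr : ∀ x y z p, TR x y p →
      (∃ q, TR x z q ∧ dist p q ≤ D) ∨ (∃ q, TR z y q ∧ dist p q ≤ D))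
    (c : ℕ → X) (n : ℕ) (hl : 0 ≤ l) (step : ∀ i, i < n → dist (c i) (c (i + 1)) ≤ l)
    (hM₀ : 2 * D + l + 1 ≤ M₀)
    (hB : ∀ i j, i ≤ n → j ≤ n → dist (c i) (c j) ≤ B)
    (short : ∀ M, M₀ ≤ M → ∀ i j, i ≤ j → j ≤ n → dist (c i) (c j) ≤ 4 * M →
      ∃ k : ℕ, j - i ≤ 2 ^ k ∧ D * k + l < M - 2 * D) :
    ∀ (N : ℕ) (M : ℝ) (a b : ℕ) (p : X), M₀ ≤ M → a ≤ b → b ≤ n → TR (c a) (c b) p →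
      (∀ i, a ≤ i → i ≤ b → M ≤ dist p (c i)) → B < M + N → False := by
  intro N
  induction N with
  | zero =>
    intro M a b p hM hab hbn h hh hBM
    have h1 := hend _ _ _ h
    have h2 := hh a le_rfl hab
    have h3 := hB a b (by omega) hbn
    rw [dist_comm] at h1
    simp at hBM
    linarith
  | succ N ih =>
    intro M a b p hM hab hbn h hh hBM
    push_cast at hBM
    classical
    by_cases hA : ∃ i, a ≤ i ∧ i ≤ b ∧ dist p (c i) ≤ 2 * M
    swap
    · push Not at hA
      exact ih (2 * M) a b p (by linarith) hab hbn h
        (fun i h1 h2 => (hA i h1 h2).le) (by linarith)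
    -- first and last close points
    obtain ⟨m, ⟨hm1, hm2, hm3⟩, hmin⟩ :
        ∃ m, (a ≤ m ∧ m ≤ b ∧ dist p (c m) ≤ 2 * M) ∧
          ∀ i, a ≤ i → i < m → 2 * M < dist p (c i) := by
      refine ⟨Nat.find hA, Nat.find_spec hA, fun i h1 h2 => ?_⟩
      have h3 := Nat.find_min hA h2
      have h4 := (Nat.find_spec hA).2.1
      push Not at h3
      exact h3 h1 (by omega)
    obtain ⟨m', ⟨hm1', hm2', hm3'⟩, hmax⟩ :
        ∃ m', (a ≤ m' ∧ m' ≤ b ∧ dist p (c m') ≤ 2 * M) ∧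
          ∀ i, m' < i → i ≤ b → 2 * M < dist p (c i) := by
      have hA' : ∃ j, j ≤ b - a ∧ dist p (c (b - j)) ≤ 2 * M :=
        ⟨b - m, by omega, by rwa [show b - (b - m) = m by omega]⟩
      refine ⟨b - Nat.find hA', ⟨?_, by omega, (Nat.find_spec hA').2⟩, fun i h1 h2 => ?_⟩
      · have := (Nat.find_spec hA').1
        omega
      · have h3 := Nat.find_min hA' (m := b - i) (by omega)
        have h4 := (Nat.find_spec hA').1
        push Not at h3
        have h5 := h3 (by omega)
        rwa [show b - (b - i) = i by omega] at h5
    have hmm : m ≤ m' := by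
      by_contra hlt
      have := hmax m (by omega) hm2
      linarith
    -- left part
    have left : ∀ q, TR (c a) (c m) q → dist p q ≤ 2 * D → False := by
      intro q hq hpq
      rcases Nat.eq_or_lt_of_le hm1 with rfl | hlt
      · have h1 := hend _ _ _ hq
        rw [dist_self] at h1
        have h2 := hh a le_rfl hab
        have h3 := dist_triangle p q (c a)
        rw [dist_comm q] at h3
        linarith
      · refine ih (2 * M - l - 2 * D) a m q (by linarith) hm1 (by omega) hq ?_ (by linarith)
        intro i h1 h2
        have h3 := dist_triangle p q (c i)
        rcases Nat.eq_or_lt_of_le h2 with rfl | h4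
        · have h5 := hmin (i - 1) (by omega) (by omega)
          have h6 := step (i - 1) (by omega)
          rw [show i - 1 + 1 = i by omega] at h6
          have h7 := dist_triangle p (c i) (c (i - 1))
          rw [dist_comm (c i)] at h7
          linarith
        · have h5 := hmin i h1 h4
          linarith
    have right : ∀ q, TR (c m') (c b) q → dist p q ≤ 2 * D → False := by
      intro q hq hpq
      rcases Nat.eq_or_lt_of_le hm2' with rfl | hlt
      · have h1 := hend _ _ _ hq
        rw [dist_self] at h1
        have h2 := hh m' hab le_rfl
        have h3 := dist_triangle p q (c m')
        rw [dist_comm q] at h3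
        linarith
      · refine ih (2 * M - l - 2 * D) m' b q (by linarith) hm2' (by omega) hq ?_ (by linarith)
        intro i h1 h2
        have h3 := dist_triangle p q (c i)
        rcases Nat.eq_or_lt_of_le h1 with rfl | h4
        · have h5 := hmax (m' + 1) (by omega) (by omega)
          have h6 := step m' (by omega)
          have h7 := dist_triangle p (c m') (c (m' + 1))
          linarith
        · have h5 := hmax i h4 h2
          linarith
    rcases hr _ _ (c m) p h with ⟨q, hq, hpq⟩ | ⟨q, hq, hpq⟩
    · exact left q hq (by linarith)
    rcases hr _ _ (c m') q hq with ⟨q', hq', hpq'⟩ | ⟨q', hq', hpq'⟩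
    swap
    · exact right q' hq' (by linarith [dist_triangle p q q'])
    have hd : dist (c m) (c m') ≤ 4 * M := by
      have := dist_triangle_left (c m) (c m') p
      linarith
    obtain ⟨k, hk1, hk2⟩ := short M hM m m' hmm (by omega) hd
    obtain ⟨i, hi1, hi2, hi3⟩ :=
      dyadic_aux_s18 TR D l hD hend hr c n hl step k m m' q' hmm (by omega) hk1 hq'
    have h1 := hh i (by omega) (by omega)
    have h2 := dist_triangle p q q'
    have h3 := dist_triangle p q' (c i)
    linarith

lemma growth_aux (D l : ℝ) (hD : 0 ≤ D) (τ : ℝ → ℝ)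
    (hτ : Filter.Tendsto (fun t => τ t / Real.log t) Filter.atTop Filter.atTop) :
    ∃ M₀ : ℝ, 2 * D + l + 1 ≤ M₀ ∧ 0 < M₀ ∧ ∀ M, M₀ ≤ M → ∀ t : ℝ, τ t ≤ 4 * M →
      ∃ k : ℕ, t + 1 ≤ 2 ^ k ∧ D * k + l < M - 2 * D := by
  obtain ⟨e, he⟩ : ∃ e : ℝ, e = Real.log 2 / (D + 1) := ⟨_, rfl⟩
  have hlog2 : 0 < Real.log 2 := Real.log_pos (by norm_num)
  have hD1 : 0 < D + 1 := by linarith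
  have hepos : 0 < e := by rw [he]; positivity
  obtain ⟨t₀, ht₀⟩ := Filter.eventually_atTop.1 (hτ.eventually_ge_atTop (8 / e))
  obtain ⟨c', hc'⟩ : ∃ c' : ℝ, c' = e * (2 * D + l + 1) + Real.log 2 := ⟨_, rfl⟩
  have hexp : Filter.Tendsto (fun M : ℝ => Real.exp (e * M / 2)) Filter.atTop Filter.atTop := by
    apply Real.tendsto_exp_atTop.comp
    have : (fun M : ℝ => e * M / 2) = fun M => (e / 2) * M := by
      ext M; ring
    rw [this]
    exact Filter.tendsto_id.const_mul_atTop (by positivity)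
  have hev := (hexp.eventually_ge_atTop (2 * Real.exp c')).and
    (hexp.eventually_ge_atTop (1 + max t₀ 2))
  obtain ⟨M₁, hM₁⟩ := Filter.eventually_atTop.1 hev
  refine ⟨max (max M₁ 1) (2 * D + l + 1), le_max_right _ _,
    lt_of_lt_of_le one_pos ((le_max_right _ _).trans (le_max_left _ _)), ?_⟩
  intro M hM t ht
  have hMM₁ : M₁ ≤ M := ((le_max_left _ _).trans (le_max_left _ _)).trans hM
  have hMD : 2 * D + l + 1 ≤ M := (le_max_right _ _).trans hM
  obtain ⟨hE1, hE2⟩ := hM₁ M hMM₁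
  set E := Real.exp (e * M / 2) with hE
  have hEpos : 0 < E := Real.exp_pos _
  have hnn : 0 ≤ (M - 2 * D - l - 1) / (D + 1) := div_nonneg (by linarith) hD1.le
  refine ⟨⌊(M - 2 * D - l - 1) / (D + 1)⌋₊, ?_, ?_⟩
  · have h1 : (M - 2 * D - l - 1) / (D + 1) - 1 < (⌊(M - 2 * D - l - 1) / (D + 1)⌋₊ : ℝ) := by
      have := Nat.lt_floor_add_one ((M - 2 * D - l - 1) / (D + 1))
      linarith
    set k := ⌊(M - 2 * D - l - 1) / (D + 1)⌋₊
    have h2 : Real.exp (e * M - c') ≤ 2 ^ k := by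
      have h3 : (2 : ℝ) ^ k = Real.exp (Real.log 2 * k) := by
        rw [mul_comm, Real.exp_nat_mul, Real.exp_log (by norm_num)]
      rw [h3]
      apply Real.exp_le_exp.2
      have h4 : e * M - c' = Real.log 2 * ((M - 2 * D - l - 1) / (D + 1) - 1) := by
        rw [hc', he]; field_simp; ring
      rw [h4]
      exact mul_le_mul_of_nonneg_left h1.le hlog2.le
    have h5 : Real.exp (e * M - c') = E * E / Real.exp c' := by
      rw [Real.exp_sub, hE, ← Real.exp_add]; congr 2; ring
    have h6 : 2 * E ≤ E * E / Real.exp c' := by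
      rw [le_div_iff₀ (Real.exp_pos _)]
      nlinarith
    have h7 : t ≤ max (max t₀ 2) E := by
      by_contra hcon
      push Not at hcon
      have h8 : max t₀ 2 < t := (le_max_left _ _).trans_lt hcon
      have h9 : E < t := (le_max_right _ _).trans_lt hcon
      have h10 : t₀ ≤ t := ((le_max_left _ _).trans_lt h8).le
      have h11 : 2 < t := (le_max_right _ _).trans_lt h8
      have hlt : 0 < Real.log t := Real.log_pos (by linarith)
      have h12 := ht₀ t h10
      rw [le_div_iff₀ hlt] at h12
      have h13 : e * M / 2 < Real.log t := by
        rw [Real.lt_log_iff_exp_lt (by linarith)]; exact h9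
      have h14 : 8 / e * (e * M / 2) < 8 / e * Real.log t :=
        mul_lt_mul_of_pos_left h13 (by positivity)
      have h15 : 8 / e * (e * M / 2) = 4 * M := by field_simp; ring
      linarith
    have h16 : max (max t₀ 2) E ≤ E := max_le (by linarith) le_rfl
    have h17 : (2 : ℝ) ≤ max t₀ 2 := le_max_right _ _
    linarith
  · have h1 := Nat.floor_le hnn
    set k := ⌊(M - 2 * D - l - 1) / (D + 1)⌋₊
    rw [le_div_iff₀ hD1] at h1
    have : (0 : ℝ) ≤ k := Nat.cast_nonneg _
    nlinarith

/-- **Proposition 4.7.** In a relatively hyperbolic space `(X, P)` with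
transient-set constants `μ, R` satisfying the relative Rips condition, every
transient point of a geodesic `γ` lies within uniformly bounded distance `E`
of the image of any subexponentially distorted coarsely Lipschitz map
`α : [0,T] → X` with the same endpoints as `γ`; `E` depends only on the
distortion data `(L, τ)` and on `(X, P)`, and not on `γ`, `α`, `T`. -/
theorem transient_uniformly_close_to_subexp_paths
    {X : Type u} [MetricSpace X] {ι : Type w} {P : ι → Set X}
    (RH : RelHypSpace X P) (μ R D : ℝ) (hμ : 0 ≤ μ) (hR : 0 ≤ R) (hD : 0 ≤ D)
    (hRips : RelRips P μ R D) :
    ∀ (L : ℝ) (τ : ℝ → ℝ), 0 < L →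
      Filter.Tendsto (fun t => τ t / Real.log t) Filter.atTop Filter.atTop →
      ∃ E : ℝ, 0 < E ∧
        ∀ (x y : X) (γ : ℝ → X), IsGeodesicFrom γ x y →
        ∀ (α : ℝ → X) (T : ℝ), 0 ≤ T → α 0 = x → α T = y →
          (∀ s ∈ Set.Icc 0 T, ∀ t ∈ Set.Icc 0 T,
            dist (α s) (α t) ≤ L * |s - t| + L ∧ τ (|s - t|) ≤ dist (α s) (α t)) →
          ∀ s : ℝ, TransientParam P μ R γ 0 (dist x y) s →
            ∃ t ∈ Set.Icc 0 T, dist (γ s) (α t) ≤ E := by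
  intro L τ hL hτ
  obtain ⟨M₀, hM1, hM2, hM3⟩ := growth_aux D (2 * L) hD τ hτ
  refine ⟨M₀, hM2, ?_⟩
  intro x y γ hγ α T hT hx hy hα s hs
  by_contra hcon
  push Not at hcon
  let TR : X → X → X → Prop := fun x y p => ∃ γ : ℝ → X, IsGeodesicFrom γ x y ∧
    ∃ s, TransientParam P μ R γ 0 (dist x y) s ∧ γ s = p
  have hend : ∀ x y p, TR x y p → dist x p ≤ dist x y := by
    rintro x y p ⟨γ, ⟨h0, h1, h2⟩, s, ⟨hs, -⟩, rfl⟩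
    have h3 := h2 0 ⟨le_rfl, dist_nonneg⟩ s hs
    rw [h0] at h3
    rw [h3, zero_sub, abs_neg, abs_of_nonneg hs.1]
    exact hs.2
  have hr : ∀ x y z p, TR x y p →
      (∃ q, TR x z q ∧ dist p q ≤ D) ∨ (∃ q, TR z y q ∧ dist p q ≤ D) := by
    rintro x y z p ⟨γ, hg, s, hs, rfl⟩
    obtain ⟨γ₁, h1⟩ := RH.geodX.exists_geod x z
    obtain ⟨γ₂, h2⟩ := RH.geodX.exists_geod z y
    rcases hRips x y z γ γ₁ γ₂ hg h1 h2 s hs with ⟨t, ht, hd⟩ | ⟨t, ht, hd⟩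
    · exact Or.inl ⟨γ₁ t, ⟨γ₁, h1, t, ht, rfl⟩, hd⟩
    · exact Or.inr ⟨γ₂ t, ⟨γ₂, h2, t, ht, rfl⟩, hd⟩
  let c : ℕ → X := fun i => α (min (i : ℝ) T)
  have hmem : ∀ i : ℕ, min (i : ℝ) T ∈ Set.Icc 0 T :=
    fun i => ⟨le_min (Nat.cast_nonneg _) hT, min_le_right _ _⟩
  have hn : T ≤ (⌈T⌉₊ : ℝ) := Nat.le_ceil T
  have hn' : (⌈T⌉₊ : ℝ) < T + 1 := Nat.ceil_lt_add_one hT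
  have c0 : c 0 = x := by simp [c, hT, hx]
  have cn : c ⌈T⌉₊ = y := by simp only [c]; rw [min_eq_right hn, hy]
  have hB : ∀ i j : ℕ, i ≤ ⌈T⌉₊ → j ≤ ⌈T⌉₊ → dist (c i) (c j) ≤ L * T + L := by
    intro i j _ _
    refine (hα _ (hmem i) _ (hmem j)).1.trans ?_
    have : |min (i : ℝ) T - min (j : ℝ) T| ≤ T := by
      have h1 := hmem i
      have h2 := hmem j
      rw [abs_le]
      constructor <;> linarith [h1.1, h1.2, h2.1, h2.2]
    nlinarith
  have step : ∀ i, i < ⌈T⌉₊ → dist (c i) (c (i + 1)) ≤ 2 * L := by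
    intro i _
    refine (hα _ (hmem i) _ (hmem (i + 1))).1.trans ?_
    have : |min (i : ℝ) T - min ((i + 1 : ℕ) : ℝ) T| ≤ 1 := by
      push_cast
      rcases min_cases (i : ℝ) T with h1 | h1 <;> rcases min_cases ((i : ℝ) + 1) T with h2 | h2 <;>
      · rw [h1.1, h2.1, abs_le]
        constructor <;> linarith
    nlinarith
  obtain ⟨N, hN⟩ := exists_nat_gt (L * T + L)
  refine key_aux TR D (2 * L) M₀ (L * T + L) hD hend hr c ⌈T⌉₊ (by linarith) step hM1 hB ?_
    N M₀ 0 ⌈T⌉₊ (γ s) le_rfl (Nat.zero_le _) le_rfl ?_ ?_ (by linarith)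
  · intro M hM i j hij hj hd
    obtain ⟨k, hk1, hk2⟩ := hM3 M hM _ ((hα _ (hmem i) _ (hmem j)).2.trans hd)
    refine ⟨k, ?_, hk2⟩
    have hij' : (i : ℝ) ≤ j := by exact_mod_cast hij
    have hj' : (j : ℝ) ≤ (⌈T⌉₊ : ℝ) := by exact_mod_cast hj
    have h1 : (j : ℝ) - i ≤ |min (i : ℝ) T - min (j : ℝ) T| + 1 := by
      have h2 := neg_abs_le (min (i : ℝ) T - min (j : ℝ) T)
      have h3 := min_le_left (i : ℝ) T
      have h4 : (j : ℝ) - 1 ≤ min (j : ℝ) T := le_min (by linarith) (by linarith)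
      linarith
    have h5 : ((j - i : ℕ) : ℝ) ≤ ((2 ^ k : ℕ) : ℝ) := by
      rw [Nat.cast_sub hij]
      push_cast
      linarith
    exact_mod_cast h5
  · rw [c0, cn]
    exact ⟨γ, hγ, s, hs, rfl⟩
  · intro i _ _
    exact (hcon _ (hmem i)).le

end RelHypPaper
end
end
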